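/- The traceless SU(2)-character variety of the twice-punctured torus restricted to classes with tr([A,B]) < 2 is homeomorphic to S² × S² minus the diagonal. Concretely: the set of conjugacy classes of quadruples (A,B,a,b) ∈ SU(2)⁴ with tr(a) = tr(b) = 0 and [A,B]ab = 1 and AB ≠ BA, under simultaneous conjugation, is homeomorphic to {(â, b̂') ∈ S² × S² : â ≠ b̂'} via [(A,B,a,b)] ↦ (â, -b̂) computed in the canonical representative. -/

import Mathlib

open Matrix

noncomputable section

def σx : Matrix (Fin 2) (Fin 2) ℂ := !![0, 1; 1, 0]
def σy : Matrix (Fin 2) (Fin 2) ℂ := !![0, -Complex.I; Complex.I, 0]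
def σz : Matrix (Fin 2) (Fin 2) ℂ := !![1, 0; 0, -1]

abbrev SU2 := Matrix.specialUnitaryGroup (Fin 2) ℂ

def dotPauli (v : Fin 3 → ℝ) : Matrix (Fin 2) (Fin 2) ℂ :=
  (v 0 : ℂ) • σx + (v 1 : ℂ) • σy + (v 2 : ℂ) • σz

def canonA (r α : ℝ) : Matrix (Fin 2) (Fin 2) ℂ :=
  ((r * Real.cos α : ℝ) : ℂ) • (1 : Matrix (Fin 2) (Fin 2) ℂ) +
    (Complex.I * ((Real.sqrt (1 - r ^ 2) : ℝ) : ℂ)) • σx +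
    (Complex.I * ((r * Real.sin α : ℝ) : ℂ)) • σz

def canonB (β : ℝ) : Matrix (Fin 2) (Fin 2) ℂ :=
  ((Real.cos β : ℝ) : ℂ) • (1 : Matrix (Fin 2) (Fin 2) ℂ) +
    (Complex.I * ((Real.sin β : ℝ) : ℂ)) • σz

/-- Quadruples `(A,B,a,b) ∈ SU(2)⁴` with `tr a = tr b = 0`, `[A,B]ab = 1`, `AB ≠ BA`. -/
def P4space : Type :=
  {q : SU2 × SU2 × SU2 × SU2 //
    Matrix.trace (q.2.2.1 : Matrix (Fin 2) (Fin 2) ℂ) = 0 ∧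
    Matrix.trace (q.2.2.2 : Matrix (Fin 2) (Fin 2) ℂ) = 0 ∧
    (q.1 : Matrix (Fin 2) (Fin 2) ℂ) * q.2.1 * (q.1 : Matrix (Fin 2) (Fin 2) ℂ)⁻¹ *
        (q.2.1 : Matrix (Fin 2) (Fin 2) ℂ)⁻¹ * q.2.2.1 * q.2.2.2 = 1 ∧
    (q.1 : Matrix (Fin 2) (Fin 2) ℂ) * q.2.1 ≠ (q.2.1 : Matrix (Fin 2) (Fin 2) ℂ) * q.1}

/-- Simultaneous conjugation relation on such quadruples. -/
def conjRel (q q' : P4space) : Prop :=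
  ∃ g : SU2,
    (g : Matrix (Fin 2) (Fin 2) ℂ) * q.1.1 * (g : Matrix (Fin 2) (Fin 2) ℂ)⁻¹ =
      (q'.1.1 : Matrix (Fin 2) (Fin 2) ℂ) ∧
    (g : Matrix (Fin 2) (Fin 2) ℂ) * q.1.2.1 * (g : Matrix (Fin 2) (Fin 2) ℂ)⁻¹ =
      (q'.1.2.1 : Matrix (Fin 2) (Fin 2) ℂ) ∧
    (g : Matrix (Fin 2) (Fin 2) ℂ) * q.1.2.2.1 * (g : Matrix (Fin 2) (Fin 2) ℂ)⁻¹ =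
      (q'.1.2.2.1 : Matrix (Fin 2) (Fin 2) ℂ) ∧
    (g : Matrix (Fin 2) (Fin 2) ℂ) * q.1.2.2.2 * (g : Matrix (Fin 2) (Fin 2) ℂ)⁻¹ =
      (q'.1.2.2.2 : Matrix (Fin 2) (Fin 2) ℂ)

/-- Pairs of distinct unit vectors in `S² × S²`. -/
def Target : Type :=
  {p : (Fin 3 → ℝ) × (Fin 3 → ℝ) //
    p.1 0 ^ 2 + p.1 1 ^ 2 + p.1 2 ^ 2 = 1 ∧
    p.2 0 ^ 2 + p.2 1 ^ 2 + p.2 2 ^ 2 = 1 ∧ p.1 ≠ p.2}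

instance : TopologicalSpace P4space := instTopologicalSpaceSubtype
instance : TopologicalSpace Target := instTopologicalSpaceSubtype


/-- The quaternion `t + i (x σx + y σy + z σz)` as a matrix. -/
def mQ (t x y z : ℝ) : Matrix (Fin 2) (Fin 2) ℂ :=
  !![⟨t, z⟩, ⟨y, x⟩; ⟨-y, x⟩, ⟨t, -z⟩]

lemma mQ_mul (t x y z t' x' y' z' : ℝ) :
    mQ t x y z * mQ t' x' y' z' =
      mQ (t * t' - x * x' - y * y' - z * z')
        (t * x' + t' * x - (y * z' - z * y'))
        (t * y' + t' * y - (z * x' - x * z'))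
        (t * z' + t' * z - (x * y' - y * x')) := by
  ext i j
  fin_cases i <;> fin_cases j <;>
    simp [mQ, Matrix.mul_apply, Fin.sum_univ_two, Complex.ext_iff] <;> constructor <;> ring

lemma mQ_one : mQ 1 0 0 0 = 1 := by
  ext i j
  fin_cases i <;> fin_cases j <;> simp [mQ, Complex.ext_iff]

lemma mQ_inj {t x y z t' x' y' z' : ℝ} (h : mQ t x y z = mQ t' x' y' z') :
    t = t' ∧ x = x' ∧ y = y' ∧ z = z' := by
  have h0 := congrFun (congrFun h 0) 0
  have h1 := congrFun (congrFun h 0) 1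
  simp [mQ, Complex.ext_iff] at h0 h1
  tauto

lemma mQ_trace (t x y z : ℝ) : (mQ t x y z).trace = ((2 * t : ℝ) : ℂ) := by
  simp [mQ, Matrix.trace_fin_two, Complex.ext_iff]; ring

lemma mQ_star (t x y z : ℝ) : star (mQ t x y z) = mQ t (-x) (-y) (-z) := by
  ext i j
  fin_cases i <;> fin_cases j <;> simp [mQ, Complex.ext_iff, Matrix.star_apply]

lemma mQ_det (t x y z : ℝ) : (mQ t x y z).det = ((t ^ 2 + x ^ 2 + y ^ 2 + z ^ 2 : ℝ) : ℂ) := by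
  simp [mQ, Matrix.det_fin_two, Complex.ext_iff, pow_two]
  constructor <;> ring

lemma mQ_mem {t x y z : ℝ} (h : t ^ 2 + x ^ 2 + y ^ 2 + z ^ 2 = 1) :
    mQ t x y z ∈ Matrix.specialUnitaryGroup (Fin 2) ℂ := by
  rw [Matrix.mem_specialUnitaryGroup_iff, Matrix.mem_unitaryGroup_iff, mQ_det, h, mQ_star, mQ_mul,
    ← mQ_one]
  refine ⟨?_, by simp⟩
  congr 1 <;> linarith

/-- Unit quaternions as elements of `SU2`. -/
def sQ (t x y z : ℝ) (h : t ^ 2 + x ^ 2 + y ^ 2 + z ^ 2 = 1) : SU2 := ⟨mQ t x y z, mQ_mem h⟩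

lemma SU2_eq (g : SU2) : ∃ t x y z : ℝ, t ^ 2 + x ^ 2 + y ^ 2 + z ^ 2 = 1 ∧
    (g : Matrix (Fin 2) (Fin 2) ℂ) = mQ t x y z := by
  obtain ⟨M, hM⟩ := g
  obtain ⟨hu, hd⟩ := Matrix.mem_specialUnitaryGroup_iff.1 hM
  have hinv : M⁻¹ = star M := Matrix.inv_eq_right_inv (Matrix.mem_unitaryGroup_iff.1 hu)
  have hadj : M⁻¹ = M.adjugate := by rw [Matrix.inv_def, hd]; simp
  have hs : star M = M.adjugate := hinv ▸ hadj
  rw [Matrix.adjugate_fin_two] at hs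
  have h0 := congrFun (congrFun hs 0) 0
  have h1 := congrFun (congrFun hs 1) 0
  simp [Matrix.star_apply, Complex.ext_iff] at h0 h1
  have e : M = mQ (M 0 0).re (M 0 1).im (M 0 1).re (M 0 0).im := by
    ext i j
    fin_cases i <;> fin_cases j <;> simp [mQ, Complex.ext_iff] <;> constructor <;> linarith
  refine ⟨_, _, _, _, ?_, e⟩
  rw [e, mQ_det] at hd
  exact_mod_cast hd

lemma SU2_coe_inv (g : SU2) : ((g⁻¹ : SU2) : Matrix (Fin 2) (Fin 2) ℂ) =
    (g : Matrix (Fin 2) (Fin 2) ℂ)⁻¹ := by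
  symm
  apply Matrix.inv_eq_right_inv
  have : ((g * g⁻¹ : SU2) : Matrix (Fin 2) (Fin 2) ℂ) = 1 := by rw [mul_inv_cancel]; rfl
  exact this

lemma trace_conj_SU2 (g : SU2) (X : Matrix (Fin 2) (Fin 2) ℂ) :
    ((g : Matrix (Fin 2) (Fin 2) ℂ) * X * (g : Matrix (Fin 2) (Fin 2) ℂ)⁻¹).trace = X.trace := by
  rw [Matrix.trace_mul_cycle, ← SU2_coe_inv]
  have : ((g⁻¹ * g : SU2) : Matrix (Fin 2) (Fin 2) ℂ) = 1 := by rw [inv_mul_cancel]; rfl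
  rw [show ((g⁻¹ : SU2) : Matrix (Fin 2) (Fin 2) ℂ) * (g : Matrix (Fin 2) (Fin 2) ℂ) = 1 from this,
    one_mul]

lemma conj_mul_conj (g : SU2) (X Y : Matrix (Fin 2) (Fin 2) ℂ) :
    ((g : Matrix (Fin 2) (Fin 2) ℂ) * X * (g : Matrix (Fin 2) (Fin 2) ℂ)⁻¹) *
    ((g : Matrix (Fin 2) (Fin 2) ℂ) * Y * (g : Matrix (Fin 2) (Fin 2) ℂ)⁻¹) =
    (g : Matrix (Fin 2) (Fin 2) ℂ) * (X * Y) * (g : Matrix (Fin 2) (Fin 2) ℂ)⁻¹ := by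
  have : (g : Matrix (Fin 2) (Fin 2) ℂ)⁻¹ * (g : Matrix (Fin 2) (Fin 2) ℂ) = 1 := by
    rw [← SU2_coe_inv]
    have : ((g⁻¹ * g : SU2) : Matrix (Fin 2) (Fin 2) ℂ) = 1 := by rw [inv_mul_cancel]; rfl
    exact this
  calc _ = (g : Matrix (Fin 2) (Fin 2) ℂ) * X * ((g : Matrix (Fin 2) (Fin 2) ℂ)⁻¹ *
    (g : Matrix (Fin 2) (Fin 2) ℂ)) * Y * (g : Matrix (Fin 2) (Fin 2) ℂ)⁻¹ := by
        simp only [Matrix.mul_assoc]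
    _ = _ := by rw [this]; simp only [Matrix.mul_assoc, Matrix.mul_one, Matrix.one_mul]

/-! Invariant coordinates. -/

def invN (B : Matrix (Fin 2) (Fin 2) ℂ) : ℝ := Real.sqrt (1 - (B.trace.re / 2) ^ 2)
def invH (A B : Matrix (Fin 2) (Fin 2) ℂ) : ℝ :=
  (-(1 / 2) * ((A * B).trace.re - A.trace.re * B.trace.re / 2)) / invN B
def invS (A B : Matrix (Fin 2) (Fin 2) ℂ) : ℝ :=
  Real.sqrt (1 - (A.trace.re / 2) ^ 2 - invH A B ^ 2)
def coZ (B X : Matrix (Fin 2) (Fin 2) ℂ) : ℝ := (-(1 / 2) * (X * B).trace.re) / invN B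
def coX (A B X : Matrix (Fin 2) (Fin 2) ℂ) : ℝ :=
  (-(1 / 2) * (X * A).trace.re - invH A B * coZ B X) / invS A B
def coY (A B X : Matrix (Fin 2) (Fin 2) ℂ) : ℝ :=
  ((X * (B * A)).trace.re - (X * (A * B)).trace.re) / (4 * invN B * invS A B)
def coV (A B X : Matrix (Fin 2) (Fin 2) ℂ) : Fin 3 → ℝ := ![coX A B X, coY A B X, coZ B X]

lemma canon_inv {u s h c σ : ℝ} (hs : 0 < s) (hσ : 0 < σ) (h1 : u ^ 2 + s ^ 2 + h ^ 2 = 1)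
    (h2 : c ^ 2 + σ ^ 2 = 1) :
    invN (mQ c 0 0 σ) = σ ∧ invH (mQ u s 0 h) (mQ c 0 0 σ) = h ∧
    invS (mQ u s 0 h) (mQ c 0 0 σ) = s := by
  have e1 : invN (mQ c 0 0 σ) = σ := by
    rw [invN, mQ_trace, Complex.ofReal_re, show 1 - (2 * c / 2) ^ 2 = σ ^ 2 by linarith,
      Real.sqrt_sq hσ.le]
  have e2 : invH (mQ u s 0 h) (mQ c 0 0 σ) = h := by
    rw [invH, e1, mQ_mul, mQ_trace, mQ_trace, mQ_trace]
    simp only [Complex.ofReal_re]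
    field_simp; ring
  refine ⟨e1, e2, ?_⟩
  rw [invS, e2, mQ_trace, Complex.ofReal_re, show 1 - (2 * u / 2) ^ 2 - h ^ 2 = s ^ 2 by linarith,
      Real.sqrt_sq hs.le]

lemma canon_coV {u s h c σ : ℝ} (hs : 0 < s) (hσ : 0 < σ) (h1 : u ^ 2 + s ^ 2 + h ^ 2 = 1)
    (h2 : c ^ 2 + σ ^ 2 = 1) (v : Fin 3 → ℝ) :
    coV (mQ u s 0 h) (mQ c 0 0 σ) (mQ 0 (v 0) (v 1) (v 2)) = v := by
  obtain ⟨e1, e2, e3⟩ := canon_inv hs hσ h1 h2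
  have ez : coZ (mQ c 0 0 σ) (mQ 0 (v 0) (v 1) (v 2)) = v 2 := by
    rw [coZ, e1, mQ_mul, mQ_trace, Complex.ofReal_re]
    field_simp; ring
  ext i
  fin_cases i
  · simp only [coV, coX, e2, e3, ez, mQ_mul, mQ_trace, Complex.ofReal_re]
    simp; field_simp; ring
  · simp only [coV, coY, e1, e3, ez, mQ_mul, mQ_trace, Complex.ofReal_re]
    simp; field_simp; ring
  · simpa [coV] using ez

lemma inv_conj (g : SU2) (A B X : Matrix (Fin 2) (Fin 2) ℂ) :
    invN (g * B * (g : Matrix (Fin 2) (Fin 2) ℂ)⁻¹) = invN B ∧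
    invS (g * A * (g : Matrix (Fin 2) (Fin 2) ℂ)⁻¹) (g * B * (g : Matrix (Fin 2) (Fin 2) ℂ)⁻¹)
      = invS A B ∧
    coV (g * A * (g : Matrix (Fin 2) (Fin 2) ℂ)⁻¹) (g * B * (g : Matrix (Fin 2) (Fin 2) ℂ)⁻¹)
      (g * X * (g : Matrix (Fin 2) (Fin 2) ℂ)⁻¹) = coV A B X := by
  simp only [coV, coX, coY, coZ, invS, invH, invN, conj_mul_conj, trace_conj_SU2, and_self]

/-- existence of the rotation taking a vector to the z axis, unnormalized -/
lemma exists_rot1 (t x y z : ℝ) : ∃ p q k l : ℝ, p ^ 2 + q ^ 2 + k ^ 2 + l ^ 2 ≠ 0 ∧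
    mQ p q k l * mQ t x y z = mQ t 0 0 (Real.sqrt (x ^ 2 + y ^ 2 + z ^ 2)) * mQ p q k l := by
  set m := Real.sqrt (x ^ 2 + y ^ 2 + z ^ 2) with hm
  have hm2 : m ^ 2 = x ^ 2 + y ^ 2 + z ^ 2 := Real.sq_sqrt (by positivity)
  by_cases h : (m + z) ^ 2 + x ^ 2 + y ^ 2 = 0
  · have hx : x = 0 := by nlinarith [sq_nonneg (m + z), sq_nonneg x, sq_nonneg y]
    have hy : y = 0 := by nlinarith [sq_nonneg (m + z), sq_nonneg x, sq_nonneg y]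
    have hz : m = - z := by
      have : m + z = 0 := by nlinarith [sq_nonneg (m + z), sq_nonneg x, sq_nonneg y]
      linarith
    refine ⟨0, 1, 0, 0, by norm_num, ?_⟩
    rw [mQ_mul, mQ_mul, hx, hy, hz]
    congr 1 <;> ring
  · refine ⟨m + z, -y, x, 0, ?_, ?_⟩
    · intro h'; apply h; linarith
    rw [mQ_mul, mQ_mul]
    congr 1
    · ring
    · ring
    · ring
    · linear_combination -hm2

lemma exists_rot2 (t x y z : ℝ) : ∃ p l : ℝ, p ^ 2 + l ^ 2 ≠ 0 ∧
    mQ p 0 0 l * mQ t x y z = mQ t (Real.sqrt (x ^ 2 + y ^ 2)) 0 z * mQ p 0 0 l := by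
  set m := Real.sqrt (x ^ 2 + y ^ 2) with hm
  have hm2 : m ^ 2 = x ^ 2 + y ^ 2 := Real.sq_sqrt (by positivity)
  by_cases h : (m + x) ^ 2 + y ^ 2 = 0
  · have hy : y = 0 := by nlinarith [sq_nonneg (m + x), sq_nonneg y]
    have hz : m = - x := by
      have : m + x = 0 := by nlinarith [sq_nonneg (m + x), sq_nonneg y]
      linarith
    refine ⟨0, 1, by norm_num, ?_⟩
    rw [mQ_mul, mQ_mul, hy, hz]
    congr 1 <;> ring
  · refine ⟨m + x, y, ?_, ?_⟩
    · intro h'; apply h; linarith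
    rw [mQ_mul, mQ_mul]
    congr 1
    · ring
    · linear_combination -hm2
    · ring
    · ring

lemma mQ_smul (r t x y z : ℝ) : mQ (r * t) (r * x) (r * y) (r * z) = (r : ℂ) • mQ t x y z := by
  ext i j
  fin_cases i <;> fin_cases j <;> simp [mQ, Complex.ext_iff]

lemma normalize_rot {p q k l : ℝ} (h : p ^ 2 + q ^ 2 + k ^ 2 + l ^ 2 ≠ 0) :
    ∃ (g : SU2) (r : ℝ), (g : Matrix (Fin 2) (Fin 2) ℂ) = (r : ℂ) • mQ p q k l := by
  have hp : 0 ≤ p ^ 2 + q ^ 2 + k ^ 2 + l ^ 2 := by positivity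
  set n := Real.sqrt (p ^ 2 + q ^ 2 + k ^ 2 + l ^ 2) with hn
  have hn2 : n ^ 2 = p ^ 2 + q ^ 2 + k ^ 2 + l ^ 2 := Real.sq_sqrt hp
  have hn0 : n ≠ 0 := by intro h0; apply h; rw [← hn2, h0]; norm_num
  refine ⟨sQ (n⁻¹ * p) (n⁻¹ * q) (n⁻¹ * k) (n⁻¹ * l) ?_, n⁻¹, mQ_smul _ _ _ _ _⟩
  field_simp; linarith

lemma conj_of_comm {g : SU2} {X Y : Matrix (Fin 2) (Fin 2) ℂ}
    (h : (g : Matrix (Fin 2) (Fin 2) ℂ) * X = Y * g) :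
    (g : Matrix (Fin 2) (Fin 2) ℂ) * X * (g : Matrix (Fin 2) (Fin 2) ℂ)⁻¹ = Y := by
  rw [h, Matrix.mul_assoc, ← SU2_coe_inv]
  have : ((g * g⁻¹ : SU2) : Matrix (Fin 2) (Fin 2) ℂ) = 1 := by rw [mul_inv_cancel]; rfl
  rw [show (g : Matrix (Fin 2) (Fin 2) ℂ) * ((g⁻¹ : SU2) : Matrix (Fin 2) (Fin 2) ℂ) = 1 from this,
    Matrix.mul_one]


lemma mQ_inv {t x y z : ℝ} (h : t ^ 2 + x ^ 2 + y ^ 2 + z ^ 2 = 1) :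
    (mQ t x y z)⁻¹ = mQ t (-x) (-y) (-z) := by
  apply Matrix.inv_eq_right_inv
  rw [mQ_mul, ← mQ_one]
  congr 1 <;> linarith

lemma canon_comm {u s h c σ : ℝ} (h1 : u ^ 2 + s ^ 2 + h ^ 2 = 1) (h2 : c ^ 2 + σ ^ 2 = 1) :
    mQ u s 0 h * mQ c 0 0 σ * (mQ u s 0 h)⁻¹ * (mQ c 0 0 σ)⁻¹ =
      mQ (1 - 2 * s ^ 2 * σ ^ 2) (2 * s * σ * (u * σ + h * c)) (-2 * s * σ * (h * σ - u * c))
        (-2 * s ^ 2 * σ * c) := by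
  rw [mQ_inv (by linarith), mQ_inv (by linarith)]
  simp only [mQ_mul]
  have hu : u ^ 2 = 1 - s ^ 2 - h ^ 2 := by linarith
  have hc : c ^ 2 = 1 - σ ^ 2 := by linarith
  congr 1 <;> ring_nf <;> simp only [hu, hc] <;> ring

lemma sq_anti {a b : Fin 3 → ℝ} (ha : a 0 ^ 2 + a 1 ^ 2 + a 2 ^ 2 = 1)
    (hb : b 0 ^ 2 + b 1 ^ 2 + b 2 ^ 2 = 1) (C : Matrix (Fin 2) (Fin 2) ℂ) :
    C * mQ 0 (a 0) (a 1) (a 2) * mQ 0 (b 0) (b 1) (b 2) = 1 ↔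
      C = mQ 0 (b 0) (b 1) (b 2) * mQ 0 (a 0) (a 1) (a 2) := by
  have ea : mQ 0 (a 0) (a 1) (a 2) * mQ 0 (a 0) (a 1) (a 2) = -1 := by
    rw [mQ_mul, ← mQ_one, ← neg_one_smul ℂ (mQ 1 0 0 0)]
    have := mQ_smul (-1) 1 0 0 0
    push_cast at this
    rw [← this]
    congr 1 <;> linarith
  have eb : mQ 0 (b 0) (b 1) (b 2) * mQ 0 (b 0) (b 1) (b 2) = -1 := by
    rw [mQ_mul, ← mQ_one, ← neg_one_smul ℂ (mQ 1 0 0 0)]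
    have := mQ_smul (-1) 1 0 0 0
    push_cast at this
    rw [← this]
    congr 1 <;> linarith
  constructor
  · intro h
    have : C * mQ 0 (a 0) (a 1) (a 2) * (mQ 0 (b 0) (b 1) (b 2) * mQ 0 (b 0) (b 1) (b 2)) *
       mQ 0 (a 0) (a 1) (a 2) = mQ 0 (b 0) (b 1) (b 2) * mQ 0 (a 0) (a 1) (a 2) := by
      rw [← Matrix.mul_assoc (C * _), h, Matrix.one_mul]
    rw [← this, eb, mul_neg, mul_one, neg_mul, Matrix.mul_assoc, ea, mul_neg, mul_one, neg_neg]
  · intro h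
    rw [h, Matrix.mul_assoc (mQ 0 (b 0) (b 1) (b 2)), ea, mul_neg, mul_one, neg_mul, eb, neg_neg]

lemma canon_rel {u s h c σ : ℝ} (h1 : u ^ 2 + s ^ 2 + h ^ 2 = 1) (h2 : c ^ 2 + σ ^ 2 = 1)
    {a b : Fin 3 → ℝ} (ha : a 0 ^ 2 + a 1 ^ 2 + a 2 ^ 2 = 1)
    (hb : b 0 ^ 2 + b 1 ^ 2 + b 2 ^ 2 = 1) :
    mQ u s 0 h * mQ c 0 0 σ * (mQ u s 0 h)⁻¹ * (mQ c 0 0 σ)⁻¹ * mQ 0 (a 0) (a 1) (a 2) *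
      mQ 0 (b 0) (b 1) (b 2) = 1 ↔
    1 - 2 * s ^ 2 * σ ^ 2 = -(a 0 * b 0 + a 1 * b 1 + a 2 * b 2) ∧
    2 * s * σ * (u * σ + h * c) = a 1 * b 2 - a 2 * b 1 ∧
    -2 * s * σ * (h * σ - u * c) = a 2 * b 0 - a 0 * b 2 ∧
    -2 * s ^ 2 * σ * c = a 0 * b 1 - a 1 * b 0 := by
  rw [sq_anti ha hb, canon_comm h1 h2, mQ_mul]
  constructor
  · intro h
    obtain ⟨e1, e2, e3, e4⟩ := mQ_inj h
    refine ⟨?_, ?_, ?_, ?_⟩ <;> linarith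
  · rintro ⟨e1, e2, e3, e4⟩
    congr 1 <;> linarith

lemma conj_P4 (g : SU2) (q : P4space) : ∃ q' : P4space,
    (g : Matrix (Fin 2) (Fin 2) ℂ) * q.1.1 * (g : Matrix (Fin 2) (Fin 2) ℂ)⁻¹ =
      (q'.1.1 : Matrix (Fin 2) (Fin 2) ℂ) ∧
    (g : Matrix (Fin 2) (Fin 2) ℂ) * q.1.2.1 * (g : Matrix (Fin 2) (Fin 2) ℂ)⁻¹ =
      (q'.1.2.1 : Matrix (Fin 2) (Fin 2) ℂ) ∧
    (g : Matrix (Fin 2) (Fin 2) ℂ) * q.1.2.2.1 * (g : Matrix (Fin 2) (Fin 2) ℂ)⁻¹ =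
      (q'.1.2.2.1 : Matrix (Fin 2) (Fin 2) ℂ) ∧
    (g : Matrix (Fin 2) (Fin 2) ℂ) * q.1.2.2.2 * (g : Matrix (Fin 2) (Fin 2) ℂ)⁻¹ =
      (q'.1.2.2.2 : Matrix (Fin 2) (Fin 2) ℂ) := by
  obtain ⟨⟨A, B, a, b⟩, ha, hb, hr, hc⟩ := q
  dsimp only at ha hb hr hc ⊢
  have key : ∀ X : SU2, ((g * X * g⁻¹ : SU2) : Matrix (Fin 2) (Fin 2) ℂ) =
      (g : Matrix (Fin 2) (Fin 2) ℂ) * X * (g : Matrix (Fin 2) (Fin 2) ℂ)⁻¹ := by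
    intro X
    rw [← SU2_coe_inv]; rfl
  have hr' : A * B * A⁻¹ * B⁻¹ * a * b = 1 := by
    apply Subtype.ext
    rw [← SU2_coe_inv, ← SU2_coe_inv] at hr
    exact hr
  have hc' : A * B ≠ B * A := by
    intro h; apply hc; exact congrArg Subtype.val h
  refine ⟨⟨(g * A * g⁻¹, g * B * g⁻¹, g * a * g⁻¹, g * b * g⁻¹), ?_, ?_, ?_, ?_⟩,
    (key _).symm, (key _).symm, (key _).symm, (key _).symm⟩
  · dsimp only; rw [key, trace_conj_SU2, ha]
  · dsimp only; rw [key, trace_conj_SU2, hb]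
  · dsimp only
    rw [← SU2_coe_inv, ← SU2_coe_inv]
    have : (g * A * g⁻¹) * (g * B * g⁻¹) * (g * A * g⁻¹)⁻¹ * (g * B * g⁻¹)⁻¹ * (g * a * g⁻¹) *
        (g * b * g⁻¹) = 1 := by
      calc _ = g * (A * B * A⁻¹ * B⁻¹ * a * b) * g⁻¹ := by group
        _ = 1 := by rw [hr']; group
    exact congrArg Subtype.val this
  · dsimp only
    intro h
    apply hc'
    have h' : (g * A * g⁻¹) * (g * B * g⁻¹) = (g * B * g⁻¹) * (g * A * g⁻¹) := Subtype.ext h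
    have h2 : g * (A * B) * g⁻¹ = g * (B * A) * g⁻¹ := by
      calc _ = (g * A * g⁻¹) * (g * B * g⁻¹) := by group
        _ = _ := by rw [h']; group
    exact mul_left_cancel (mul_right_cancel h2)

/-- `q` is in canonical form with the given parameters. -/
structure IsCanon (q : P4space) (u s h c σ : ℝ) (a b : Fin 3 → ℝ) : Prop where
  hs : 0 < s
  hσ : 0 < σ
  h1 : u ^ 2 + s ^ 2 + h ^ 2 = 1
  h2 : c ^ 2 + σ ^ 2 = 1
  ha : a 0 ^ 2 + a 1 ^ 2 + a 2 ^ 2 = 1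
  hb : b 0 ^ 2 + b 1 ^ 2 + b 2 ^ 2 = 1
  eA : (q.1.1 : Matrix (Fin 2) (Fin 2) ℂ) = mQ u s 0 h
  eB : (q.1.2.1 : Matrix (Fin 2) (Fin 2) ℂ) = mQ c 0 0 σ
  ea : (q.1.2.2.1 : Matrix (Fin 2) (Fin 2) ℂ) = mQ 0 (a 0) (a 1) (a 2)
  eb : (q.1.2.2.2 : Matrix (Fin 2) (Fin 2) ℂ) = mQ 0 (b 0) (b 1) (b 2)

lemma conj_trans {g g' : SU2} {X Y Z : Matrix (Fin 2) (Fin 2) ℂ}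
    (h : (g : Matrix (Fin 2) (Fin 2) ℂ) * X * (g : Matrix (Fin 2) (Fin 2) ℂ)⁻¹ = Y)
    (h' : (g' : Matrix (Fin 2) (Fin 2) ℂ) * Y * (g' : Matrix (Fin 2) (Fin 2) ℂ)⁻¹ = Z) :
    ((g' * g : SU2) : Matrix (Fin 2) (Fin 2) ℂ) * X *
      ((g' * g : SU2) : Matrix (Fin 2) (Fin 2) ℂ)⁻¹ = Z := by
  rw [← SU2_coe_inv, _root_.mul_inv_rev, ← h', ← h, ← SU2_coe_inv, ← SU2_coe_inv]
  simp only [Submonoid.coe_mul, Matrix.mul_assoc]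

lemma conjRel_trans {q q' q'' : P4space} (h : conjRel q q') (h' : conjRel q' q'') :
    conjRel q q'' := by
  obtain ⟨g, h1, h2, h3, h4⟩ := h
  obtain ⟨g', h1', h2', h3', h4'⟩ := h'
  exact ⟨g' * g, conj_trans h1 h1', conj_trans h2 h2', conj_trans h3 h3', conj_trans h4 h4'⟩

lemma traceless_eq (X : SU2) (h : (X : Matrix (Fin 2) (Fin 2) ℂ).trace = 0) :
    ∃ v : Fin 3 → ℝ, v 0 ^ 2 + v 1 ^ 2 + v 2 ^ 2 = 1 ∧
      (X : Matrix (Fin 2) (Fin 2) ℂ) = mQ 0 (v 0) (v 1) (v 2) := by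
  obtain ⟨t, x, y, z, h1, h2⟩ := SU2_eq X
  rw [h2, mQ_trace] at h
  have ht : t = 0 := by
    have : 2 * t = 0 := by exact_mod_cast h
    linarith
  subst ht
  exact ⟨![x, y, z], by simpa using h1, by simpa using h2⟩

lemma exists_canon (q : P4space) : ∃ q' u s h c σ a b, conjRel q q' ∧
    IsCanon q' u s h c σ a b := by
  obtain ⟨t, x, y, z, hB, eB⟩ := SU2_eq q.1.2.1
  obtain ⟨p1, p2, p3, p4, hp, hrot⟩ := exists_rot1 t x y z
  obtain ⟨g, r, hg⟩ := normalize_rot hp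
  obtain ⟨q1, c1, c2, c3, c4⟩ := conj_P4 g q
  have hq1B : (q1.1.2.1 : Matrix (Fin 2) (Fin 2) ℂ) =
      mQ t 0 0 (Real.sqrt (x ^ 2 + y ^ 2 + z ^ 2)) := by
    rw [← c2]
    apply conj_of_comm
    rw [eB, hg, Matrix.smul_mul, hrot, Matrix.mul_smul]
  set σ := Real.sqrt (x ^ 2 + y ^ 2 + z ^ 2) with hσ
  have hσ2 : σ ^ 2 = x ^ 2 + y ^ 2 + z ^ 2 := Real.sq_sqrt (by positivity)
  obtain ⟨t', x', y', z', hA, eA⟩ := SU2_eq q1.1.1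
  obtain ⟨p1', p4', hp', hrot'⟩ := exists_rot2 t' x' y' z'
  obtain ⟨g', r', hg'⟩ := normalize_rot (p := p1') (q := 0) (k := 0) (l := p4')
    (by intro h; apply hp'; linarith)
  obtain ⟨q2, d1, d2, d3, d4⟩ := conj_P4 g' q1
  have hq2A : (q2.1.1 : Matrix (Fin 2) (Fin 2) ℂ) =
      mQ t' (Real.sqrt (x' ^ 2 + y' ^ 2)) 0 z' := by
    rw [← d1]
    apply conj_of_comm
    rw [eA, hg', Matrix.smul_mul, hrot', Matrix.mul_smul]
  have hq2B : (q2.1.2.1 : Matrix (Fin 2) (Fin 2) ℂ) = mQ t 0 0 σ := by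
    rw [← d2]
    apply conj_of_comm
    rw [hq1B, hg', Matrix.smul_mul, Matrix.mul_smul, mQ_mul, mQ_mul]
    congr 2 <;> ring
  set s := Real.sqrt (x' ^ 2 + y' ^ 2) with hs
  have hs2 : s ^ 2 = x' ^ 2 + y' ^ 2 := Real.sq_sqrt (by positivity)
  obtain ⟨a, ha, ea⟩ := traceless_eq _ q2.2.1
  obtain ⟨b, hb, eb⟩ := traceless_eq _ q2.2.2.1
  have hne := q2.2.2.2.2
  rw [hq2A, hq2B, mQ_mul, mQ_mul] at hne
  have hσ0 : σ ≠ 0 := by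
    intro h0; apply hne; rw [h0]; congr 1 <;> ring
  have hs0 : s ≠ 0 := by
    intro h0; apply hne; rw [h0]; congr 1 <;> ring
  refine ⟨q2, t', s, z', t, σ, a, b, conjRel_trans ⟨g, c1, c2, c3, c4⟩ ⟨g', d1, d2, d3, d4⟩,
    lt_of_le_of_ne (Real.sqrt_nonneg _) hs0.symm, lt_of_le_of_ne (Real.sqrt_nonneg _) hσ0.symm,
    by linarith, by linarith, ha, hb, hq2A, hq2B, ea, eb⟩

lemma IsCanon.rel {q : P4space} {u s h c σ : ℝ} {a b : Fin 3 → ℝ} (H : IsCanon q u s h c σ a b) :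
    1 - 2 * s ^ 2 * σ ^ 2 = -(a 0 * b 0 + a 1 * b 1 + a 2 * b 2) ∧
    2 * s * σ * (u * σ + h * c) = a 1 * b 2 - a 2 * b 1 ∧
    -2 * s * σ * (h * σ - u * c) = a 2 * b 0 - a 0 * b 2 ∧
    -2 * s ^ 2 * σ * c = a 0 * b 1 - a 1 * b 0 := by
  have := q.2.2.2.1
  rw [H.eA, H.eB, H.ea, H.eb] at this
  exact (canon_rel H.h1 H.h2 H.ha H.hb).1 this

/-- forward map on representatives -/
def fwd0 (q : P4space) : (Fin 3 → ℝ) × (Fin 3 → ℝ) :=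
  (coV q.1.1 q.1.2.1 q.1.2.2.1, -coV q.1.1 q.1.2.1 q.1.2.2.2)

lemma fwd0_conj {q q' : P4space} (h : conjRel q q') : fwd0 q = fwd0 q' := by
  obtain ⟨g, h1, h2, h3, h4⟩ := h
  rw [fwd0, fwd0, ← h1, ← h2, ← h3, ← h4, (inv_conj g _ _ _).2.2, (inv_conj g _ _ _).2.2]

lemma fwd0_canon {q : P4space} {u s h c σ : ℝ} {a b : Fin 3 → ℝ}
    (H : IsCanon q u s h c σ a b) : fwd0 q = (a, -b) := by
  rw [fwd0, H.eA, H.eB, H.ea, H.eb, canon_coV H.hs H.hσ H.h1 H.h2, canon_coV H.hs H.hσ H.h1 H.h2]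

lemma canon_target {q : P4space} {u s h c σ : ℝ} {a b : Fin 3 → ℝ}
    (H : IsCanon q u s h c σ a b) : a ≠ -b := by
  intro hab
  have e := H.rel.1
  have ha := H.ha
  have h3 : ∀ i, b i = - a i := by intro i; rw [hab]; simp
  simp only [h3] at e
  have : 0 < s ^ 2 * σ ^ 2 := by
    have := H.hs; have := H.hσ; positivity
  nlinarith

def fwd (q : P4space) : Target := ⟨fwd0 q, by
  obtain ⟨q', u, s, h, c, σ, a, b, hc, H⟩ := exists_canon q
  rw [fwd0_conj hc, fwd0_canon H]
  exact ⟨H.ha, by simpa using H.hb, canon_target H⟩⟩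

lemma inv_ne (q : P4space) : invN q.1.2.1 ≠ 0 ∧ invS q.1.1 q.1.2.1 ≠ 0 := by
  obtain ⟨q', u, s, h, c, σ, a, b, ⟨g, g1, g2, g3, g4⟩, H⟩ := exists_canon q
  rw [← (inv_conj g q.1.1 q.1.2.1 1).1, ← (inv_conj g q.1.1 q.1.2.1 1).2.1, g1, g2, H.eA, H.eB,
    (canon_inv H.hs H.hσ H.h1 H.h2).1, (canon_inv H.hs H.hσ H.h1 H.h2).2.2]
  exact ⟨H.hσ.ne', H.hs.ne'⟩

lemma continuous_fwd : Continuous fwd := by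
  have hv : Continuous (fun q : P4space => q.1) := continuous_subtype_val
  have cA : Continuous (fun q : P4space => (q.1.1 : Matrix (Fin 2) (Fin 2) ℂ)) :=
    continuous_subtype_val.comp (continuous_fst.comp hv)
  have cB : Continuous (fun q : P4space => (q.1.2.1 : Matrix (Fin 2) (Fin 2) ℂ)) :=
    continuous_subtype_val.comp (continuous_fst.comp (continuous_snd.comp hv))
  have ca : Continuous (fun q : P4space => (q.1.2.2.1 : Matrix (Fin 2) (Fin 2) ℂ)) :=
    continuous_subtype_val.comp
      (continuous_fst.comp (continuous_snd.comp (continuous_snd.comp hv)))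
  have cb : Continuous (fun q : P4space => (q.1.2.2.2 : Matrix (Fin 2) (Fin 2) ℂ)) :=
    continuous_subtype_val.comp
      (continuous_snd.comp (continuous_snd.comp (continuous_snd.comp hv)))
  have tr : ∀ f : P4space → Matrix (Fin 2) (Fin 2) ℂ, Continuous f →
      Continuous (fun q => (f q).trace.re) := fun f hf =>
    Complex.continuous_re.comp hf.matrix_trace
  have cN : Continuous (fun q : P4space => invN q.1.2.1) :=
    Real.continuous_sqrt.comp (continuous_const.sub (((tr _ cB).div_const 2).pow 2))
  have cH : Continuous (fun q : P4space => invH q.1.1 q.1.2.1) :=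
    (continuous_const.mul ((tr _ (cA.mul cB)).sub (((tr _ cA).mul (tr _ cB)).div_const 2))).div cN
      (fun q => (inv_ne q).1)
  have cS : Continuous (fun q : P4space => invS q.1.1 q.1.2.1) :=
    Real.continuous_sqrt.comp
      ((continuous_const.sub (((tr _ cA).div_const 2).pow 2)).sub (cH.pow 2))
  have cV : ∀ f : P4space → Matrix (Fin 2) (Fin 2) ℂ, Continuous f →
      Continuous (fun q => coV q.1.1 q.1.2.1 (f q)) := by
    intro f hf
    have cZ : Continuous (fun q => coZ q.1.2.1 (f q)) :=
      (continuous_const.mul (tr _ (hf.mul cB))).div cN (fun q => (inv_ne q).1)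
    have cX : Continuous (fun q => coX q.1.1 q.1.2.1 (f q)) :=
      ((continuous_const.mul (tr _ (hf.mul cA))).sub (cH.mul cZ)).div cS (fun q => (inv_ne q).2)
    have cY : Continuous (fun q => coY q.1.1 q.1.2.1 (f q)) :=
      ((tr _ (hf.mul (cB.mul cA))).sub (tr _ (hf.mul (cA.mul cB)))).div
        ((continuous_const.mul cN).mul cS)
        (fun q => mul_ne_zero (mul_ne_zero (by norm_num) (inv_ne q).1) (inv_ne q).2)
    apply continuous_pi
    intro i
    fin_cases i
    · exact cX
    · exact cY
    · exact cZ
  exact Continuous.subtype_mk ((cV _ ca).prodMk (cV _ cb).neg) _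

/-! The section. -/

def dK (p : Target) : ℝ := 1 - (p.1.1 0 * p.1.2 0 + p.1.1 1 * p.1.2 1 + p.1.1 2 * p.1.2 2)
def w0 (p : Target) : ℝ := p.1.2 1 * p.1.1 2 - p.1.2 2 * p.1.1 1
def w1 (p : Target) : ℝ := p.1.2 2 * p.1.1 0 - p.1.2 0 * p.1.1 2
def w2 (p : Target) : ℝ := p.1.2 0 * p.1.1 1 - p.1.2 1 * p.1.1 0
def mm (p : Target) : ℝ := Real.sqrt (dK p ^ 2 + w2 p ^ 2)
def sS (p : Target) : ℝ := mm p / Real.sqrt (2 * dK p)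
def sU (p : Target) : ℝ := sS p * (w0 p * dK p - w1 p * w2 p) / mm p ^ 2
def sH (p : Target) : ℝ := sS p * (-w0 p * w2 p - w1 p * dK p) / mm p ^ 2
def sC (p : Target) : ℝ := - w2 p / mm p
def sG (p : Target) : ℝ := dK p / mm p

lemma dK_pos (p : Target) : 0 < dK p := by
  obtain ⟨⟨a, b⟩, ha, hb, hab⟩ := p
  dsimp only [dK] at *
  by_contra hcon
  apply hab
  have key : (a 0 - b 0) ^ 2 + (a 1 - b 1) ^ 2 + (a 2 - b 2) ^ 2 ≤ 0 := by nlinarith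
  have e0 : a 0 - b 0 = 0 := by
    nlinarith [sq_nonneg (a 0 - b 0), sq_nonneg (a 1 - b 1), sq_nonneg (a 2 - b 2)]
  have e1 : a 1 - b 1 = 0 := by
    nlinarith [sq_nonneg (a 0 - b 0), sq_nonneg (a 1 - b 1), sq_nonneg (a 2 - b 2)]
  have e2 : a 2 - b 2 = 0 := by
    nlinarith [sq_nonneg (a 0 - b 0), sq_nonneg (a 1 - b 1), sq_nonneg (a 2 - b 2)]
  ext i
  fin_cases i
  · exact sub_eq_zero.1 e0
  · exact sub_eq_zero.1 e1
  · exact sub_eq_zero.1 e2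

lemma lagrange (p : Target) : (1 - dK p) ^ 2 + w0 p ^ 2 + w1 p ^ 2 + w2 p ^ 2 = 1 := by
  obtain ⟨⟨a, b⟩, ha, hb, hab⟩ := p
  dsimp only [dK, w0, w1, w2] at *
  linear_combination (b 0 ^ 2 + b 1 ^ 2 + b 2 ^ 2) * ha + hb

lemma mm_sq (p : Target) : mm p ^ 2 = dK p ^ 2 + w2 p ^ 2 := Real.sq_sqrt (by positivity)

lemma mm_pos (p : Target) : 0 < mm p :=
  Real.sqrt_pos.2 (by have := dK_pos p; positivity)

lemma sS_pos (p : Target) : 0 < sS p :=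
  div_pos (mm_pos p) (Real.sqrt_pos.2 (by have := dK_pos p; positivity))

lemma sS_sq (p : Target) : sS p ^ 2 = mm p ^ 2 / (2 * dK p) := by
  rw [sS, div_pow, Real.sq_sqrt (by have := dK_pos p; positivity)]

lemma sG_pos (p : Target) : 0 < sG p := div_pos (dK_pos p) (mm_pos p)

lemma sec_h2 (p : Target) : sC p ^ 2 + sG p ^ 2 = 1 := by
  have := mm_pos p
  rw [sC, sG]; field_simp; rw [mm_sq]; ring

lemma sec_h1 (p : Target) : sU p ^ 2 + sS p ^ 2 + sH p ^ 2 = 1 := by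
  have hm := mm_pos p
  have hd := dK_pos p
  have l := lagrange p
  have e : sU p ^ 2 + sS p ^ 2 + sH p ^ 2 =
    sS p ^ 2 * ((w0 p * dK p - w1 p * w2 p) ^ 2 + (-w0 p * w2 p - w1 p * dK p) ^ 2
      + (mm p ^ 2) ^ 2) / (mm p ^ 2) ^ 2 := by
    rw [sU, sH]; field_simp; ring
  have e2 : (w0 p * dK p - w1 p * w2 p) ^ 2 + (-w0 p * w2 p - w1 p * dK p) ^ 2
      + (mm p ^ 2) ^ 2 = mm p ^ 2 * (2 * dK p) := by
    rw [mm_sq]; linear_combination (dK p ^ 2 + w2 p ^ 2) * l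
  rw [e, e2, sS_sq]
  field_simp

lemma sec_rel (p : Target) :
    1 - 2 * sS p ^ 2 * sG p ^ 2 = 1 - dK p ∧
    2 * sS p * sG p * (sU p * sG p + sH p * sC p) = w0 p ∧
    -2 * sS p * sG p * (sH p * sG p - sU p * sC p) = w1 p ∧
    -2 * sS p ^ 2 * sG p * sC p = w2 p := by
  have hm := mm_pos p
  have hd := dK_pos p
  have hm2 := mm_sq p
  have hs := sS_sq p
  refine ⟨?_, ?_, ?_, ?_⟩
  · rw [hs, sG]; field_simp
  · have : 2 * sS p * sG p * (sU p * sG p + sH p * sC p) = 2 * sS p ^ 2 * dK p *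
      ((w0 p * dK p - w1 p * w2 p) * dK p - (-w0 p * w2 p - w1 p * dK p) * w2 p) /
        (mm p ^ 2) ^ 2 := by
      rw [sU, sH, sG, sC]; field_simp; ring
    rw [this, hs, show (w0 p * dK p - w1 p * w2 p) * dK p - (-w0 p * w2 p - w1 p * dK p) * w2 p =
      w0 p * mm p ^ 2 by rw [hm2]; ring]
    field_simp
  · have : -2 * sS p * sG p * (sH p * sG p - sU p * sC p) = -2 * sS p ^ 2 * dK p *
      ((-w0 p * w2 p - w1 p * dK p) * dK p + (w0 p * dK p - w1 p * w2 p) * w2 p) /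
        (mm p ^ 2) ^ 2 := by
      rw [sU, sH, sG, sC]; field_simp; ring
    rw [this, hs, show (-w0 p * w2 p - w1 p * dK p) * dK p + (w0 p * dK p - w1 p * w2 p) * w2 p =
      - w1 p * mm p ^ 2 by rw [hm2]; ring]
    field_simp
  · rw [hs, sG, sC]; field_simp

def sec (p : Target) : P4space :=
  ⟨(sQ (sU p) (sS p) 0 (sH p) (by have := sec_h1 p; linarith),
    sQ (sC p) 0 0 (sG p) (by have := sec_h2 p; linarith),
    sQ 0 (p.1.1 0) (p.1.1 1) (p.1.1 2) (by have := p.2.1; linarith),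
    sQ 0 (-p.1.2 0) (-p.1.2 1) (-p.1.2 2) (by have := p.2.2.1; linarith)), by
    refine ⟨?_, ?_, ?_, ?_⟩
    · simp [sQ, mQ_trace]
    · simp [sQ, mQ_trace]
    · dsimp only [sQ]
      have := canon_rel (sec_h1 p) (sec_h2 p) (a := p.1.1) (b := -p.1.2) p.2.1
        (by simpa using p.2.2.1)
      refine this.2 ?_
      obtain ⟨e1, e2, e3, e4⟩ := sec_rel p
      rw [e1, e2, e3, e4]
      simp only [dK, w0, w1, w2, Pi.neg_apply]
      refine ⟨?_, ?_, ?_, ?_⟩ <;> ring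
    · dsimp only [sQ]
      rw [mQ_mul, mQ_mul]
      intro h
      have h3 := (mQ_inj h).2.2.1
      have := mul_pos (sS_pos p) (sG_pos p)
      linarith⟩

lemma sec_canon (p : Target) :
    IsCanon (sec p) (sU p) (sS p) (sH p) (sC p) (sG p) p.1.1 (-p.1.2) :=
  ⟨sS_pos p, sG_pos p, sec_h1 p, sec_h2 p, p.2.1, by simpa using p.2.2.1, rfl, rfl, rfl, rfl⟩

lemma continuous_mQ {X : Type*} [TopologicalSpace X] {t x y z : X → ℝ} (ht : Continuous t)
    (hx : Continuous x) (hy : Continuous y) (hz : Continuous z) :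
    Continuous (fun i => mQ (t i) (x i) (y i) (z i)) := by
  have hC : ∀ f g : X → ℝ, Continuous f → Continuous g →
      Continuous (fun i => (⟨f i, g i⟩ : ℂ)) := by
    intro f g hf hg
    simp only [Complex.mk_eq_add_mul_I]
    fun_prop
  apply continuous_matrix
  intro i j
  fin_cases i <;> fin_cases j
  · exact hC _ _ ht hz
  · exact hC _ _ hy hx
  · exact hC _ _ hy.neg hx
  · exact hC _ _ ht hz.neg

lemma continuous_sec : Continuous sec := by
  have hv : Continuous (fun p : Target => p.1) := continuous_subtype_val
  have c1 : ∀ i, Continuous (fun p : Target => p.1.1 i) := fun i =>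
    (continuous_apply i).comp (continuous_fst.comp hv)
  have c2 : ∀ i, Continuous (fun p : Target => p.1.2 i) := fun i =>
    (continuous_apply i).comp (continuous_snd.comp hv)
  have cd : Continuous dK := continuous_const.sub
    ((((c1 0).mul (c2 0)).add ((c1 1).mul (c2 1))).add ((c1 2).mul (c2 2)))
  have cw0 : Continuous w0 := ((c2 1).mul (c1 2)).sub ((c2 2).mul (c1 1))
  have cw1 : Continuous w1 := ((c2 2).mul (c1 0)).sub ((c2 0).mul (c1 2))
  have cw2 : Continuous w2 := ((c2 0).mul (c1 1)).sub ((c2 1).mul (c1 0))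
  have cm : Continuous mm := Real.continuous_sqrt.comp ((cd.pow 2).add (cw2.pow 2))
  have cs : Continuous sS := cm.div (Real.continuous_sqrt.comp (continuous_const.mul cd))
    (fun p => (Real.sqrt_pos.2 (by have := dK_pos p; positivity)).ne')
  have cu : Continuous sU := (cs.mul ((cw0.mul cd).sub (cw1.mul cw2))).div (cm.pow 2)
    (fun p => (pow_pos (mm_pos p) 2).ne')
  have ch : Continuous sH := (cs.mul ((cw0.neg.mul cw2).sub (cw1.mul cd))).div (cm.pow 2)
    (fun p => (pow_pos (mm_pos p) 2).ne')
  have cc : Continuous sC := cw2.neg.div cm (fun p => (mm_pos p).ne')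
  have cg : Continuous sG := cd.div cm (fun p => (mm_pos p).ne')
  refine Continuous.subtype_mk ?_ _
  refine Continuous.prodMk ?_ (Continuous.prodMk ?_ (Continuous.prodMk ?_ ?_))
  · exact Continuous.subtype_mk (continuous_mQ cu cs continuous_const ch) _
  · exact Continuous.subtype_mk (continuous_mQ cc continuous_const continuous_const cg) _
  · exact Continuous.subtype_mk (continuous_mQ continuous_const (c1 0) (c1 1) (c1 2)) _
  · exact Continuous.subtype_mk
      (continuous_mQ continuous_const (c2 0).neg (c2 1).neg (c2 2).neg) _

lemma canon_params {u s h c σ δ y0 y1 y2 u' s' h' c' σ' : ℝ} (hs : 0 < s) (hσ : 0 < σ)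
    (h2 : c ^ 2 + σ ^ 2 = 1) (hs' : 0 < s') (hσ' : 0 < σ')
    (h2' : c' ^ 2 + σ' ^ 2 = 1)
    (e1 : 1 - 2 * s ^ 2 * σ ^ 2 = δ) (e2 : 2 * s * σ * (u * σ + h * c) = y0)
    (e3 : -2 * s * σ * (h * σ - u * c) = y1) (e4 : -2 * s ^ 2 * σ * c = y2)
    (e1' : 1 - 2 * s' ^ 2 * σ' ^ 2 = δ) (e2' : 2 * s' * σ' * (u' * σ' + h' * c') = y0)
    (e3' : -2 * s' * σ' * (h' * σ' - u' * c') = y1) (e4' : -2 * s' ^ 2 * σ' * c' = y2) :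
    u = u' ∧ s = s' ∧ h = h' ∧ c = c' ∧ σ = σ' := by
  have hN : 2 * s ^ 2 * σ = 2 * s' ^ 2 * σ' := by
    have : (2 * s ^ 2 * σ) ^ 2 = (2 * s' ^ 2 * σ') ^ 2 := by
      have l1 : (2 * s ^ 2 * σ) ^ 2 = (1 - δ) ^ 2 + y2 ^ 2 := by
        rw [← e1, ← e4]; linear_combination (-(2 * s ^ 2 * σ) ^ 2) * h2
      have l2 : (2 * s' ^ 2 * σ') ^ 2 = (1 - δ) ^ 2 + y2 ^ 2 := by
        rw [← e1', ← e4']; linear_combination (-(2 * s' ^ 2 * σ') ^ 2) * h2'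
      rw [l1, l2]
    exact (pow_left_inj₀ (by positivity) (by positivity) two_ne_zero).1 this
  have hN0 : 2 * s ^ 2 * σ ≠ 0 := by positivity
  have hσe : σ = σ' := by
    apply mul_left_cancel₀ hN0
    calc _ = 2 * s' ^ 2 * σ' * σ' := by linarith
      _ = _ := by rw [hN]
  have hce : c = c' := by
    apply mul_left_cancel₀ hN0
    calc _ = 2 * s' ^ 2 * σ' * c' := by linarith
      _ = _ := by rw [hN]
  subst hσe hce
  have hse : s = s' := by
    have : s ^ 2 = s' ^ 2 := by
      have := mul_right_cancel₀ hσ.ne' hN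
      linarith
    exact (pow_left_inj₀ hs.le hs'.le two_ne_zero).1 this
  subst hse
  have hss : 2 * s * σ ≠ 0 := by positivity
  have f1 : u * σ + h * c = u' * σ + h' * c := mul_left_cancel₀ hss (by linarith)
  have f2 : h * σ - u * c = h' * σ - u' * c := mul_left_cancel₀ hss (by linarith)
  refine ⟨?_, rfl, ?_, rfl, rfl⟩
  · linear_combination σ * f1 - c * f2 - (u - u') * h2
  · linear_combination c * f1 + σ * f2 - (h - h') * h2

lemma canon_unique {q q' : P4space} {u s h c σ u' s' h' c' σ' : ℝ} {a b : Fin 3 → ℝ}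
    (H : IsCanon q u s h c σ a b) (H' : IsCanon q' u' s' h' c' σ' a b) : q = q' := by
  obtain ⟨e1, e2, e3, e4⟩ := H.rel
  obtain ⟨e1', e2', e3', e4'⟩ := H'.rel
  obtain ⟨r1, r2, r3, r4, r5⟩ := canon_params H.hs H.hσ H.h2 H'.hs H'.hσ H'.h2 e1 e2 e3 e4
    e1' e2' e3' e4'
  subst r1 r2 r3 r4 r5
  apply Subtype.ext
  refine Prod.ext (Subtype.ext (H.eA.trans H'.eA.symm)) (Prod.ext
    (Subtype.ext (H.eB.trans H'.eB.symm)) (Prod.ext (Subtype.ext (H.ea.trans H'.ea.symm))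
    (Subtype.ext (H.eb.trans H'.eb.symm))))

lemma fwd_conj {q q' : P4space} (h : conjRel q q') : fwd q = fwd q' :=
  Subtype.ext (fwd0_conj h)

lemma fwd_sec (p : Target) : fwd (sec p) = p := by
  apply Subtype.ext
  change fwd0 (sec p) = _
  rw [fwd0_canon (sec_canon p), neg_neg]

lemma sec_fwd (q : P4space) : Quot.mk conjRel (sec (fwd q)) = Quot.mk conjRel q := by
  obtain ⟨q', u, s, h, c, σ, a, b, hc, H⟩ := exists_canon q
  rw [Quot.sound hc, fwd_conj hc]
  have e : (fwd q').1 = (a, -b) := fwd0_canon H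
  have K := sec_canon (fwd q')
  rw [e] at K
  simp only [neg_neg] at K
  rw [canon_unique K H]

def theHomeo : Quot conjRel ≃ₜ Target where
  toFun := Quot.lift fwd (fun _ _ h => fwd_conj h)
  invFun p := Quot.mk conjRel (sec p)
  left_inv := by
    rintro ⟨q⟩
    exact sec_fwd q
  right_inv p := fwd_sec p
  continuous_toFun := continuous_quot_lift _ continuous_fwd
  continuous_invFun := continuous_quot_mk.comp continuous_sec

lemma dotPauli_eq (v : Fin 3 → ℝ) : Complex.I • dotPauli v = mQ 0 (v 0) (v 1) (v 2) := by
  ext i j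
  fin_cases i <;> fin_cases j <;> simp [mQ, dotPauli, σx, σy, σz, Complex.ext_iff]

lemma canonA_eq (r α : ℝ) : canonA r α =
    mQ (r * Real.cos α) (Real.sqrt (1 - r ^ 2)) 0 (r * Real.sin α) := by
  ext i j
  fin_cases i <;> fin_cases j <;>
    simp [mQ, canonA, σx, σz, Complex.ext_iff, -Complex.ofReal_cos, -Complex.ofReal_sin,
      -Complex.ofReal_mul]

lemma canonB_eq (β : ℝ) : canonB β = mQ (Real.cos β) 0 0 (Real.sin β) := by
  ext i j
  fin_cases i <;> fin_cases j <;>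
    simp [mQ, canonB, σz, Complex.ext_iff, -Complex.ofReal_cos, -Complex.ofReal_sin]

lemma unit_of_mem (X : SU2) (v : Fin 3 → ℝ)
    (h : (X : Matrix (Fin 2) (Fin 2) ℂ) = mQ 0 (v 0) (v 1) (v 2)) :
    v 0 ^ 2 + v 1 ^ 2 + v 2 ^ 2 = 1 := by
  have := (Matrix.mem_specialUnitaryGroup_iff.1 X.2).2
  rw [h, mQ_det] at this
  have h' : (0 : ℝ) ^ 2 + v 0 ^ 2 + v 1 ^ 2 + v 2 ^ 2 = 1 := by exact_mod_cast this
  linarith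

/-- The piece of the traceless character variety of the twice-punctured torus with
`AB ≠ BA` is homeomorphic to `S² × S²` minus the diagonal, via `[(A,B,a,b)] ↦ (â,-b̂)`
computed in the canonical representative. -/
theorem P4_homeomorph_sphere_sq_minus_diagonal :
    ∃ F : Quot conjRel ≃ₜ Target,
      ∀ (q : P4space) (r α β : ℝ) (va vb : Fin 3 → ℝ),
        r ∈ Set.Ico (0 : ℝ) 1 → β ∈ Set.Ioo (0 : ℝ) Real.pi →
        (q.1.1 : Matrix (Fin 2) (Fin 2) ℂ) = canonA r α →
        (q.1.2.1 : Matrix (Fin 2) (Fin 2) ℂ) = canonB β →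
        (q.1.2.2.1 : Matrix (Fin 2) (Fin 2) ℂ) = Complex.I • dotPauli va →
        (q.1.2.2.2 : Matrix (Fin 2) (Fin 2) ℂ) = Complex.I • dotPauli vb →
        (F (Quot.mk conjRel q)).1 = (va, -vb) := by
  refine ⟨theHomeo, ?_⟩
  intro q r α β va vb hr hβ eA eB ea eb
  rw [canonA_eq] at eA
  rw [canonB_eq] at eB
  rw [dotPauli_eq] at ea eb
  have hr2 : 0 < 1 - r ^ 2 := by nlinarith [hr.1, hr.2]
  have H : IsCanon q (r * Real.cos α) (Real.sqrt (1 - r ^ 2)) (r * Real.sin α) (Real.cos β)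
      (Real.sin β) va vb :=
    ⟨Real.sqrt_pos.2 hr2, Real.sin_pos_of_mem_Ioo hβ, by
      rw [Real.sq_sqrt hr2.le]; linear_combination r ^ 2 * Real.sin_sq_add_cos_sq α,
      Real.cos_sq_add_sin_sq β, unit_of_mem _ _ ea, unit_of_mem _ _ eb, eA, eB, ea, eb⟩
  exact fwd0_canon H
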